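/- Let (M,E,V) be a path geometry, ξ₀ ∈ Γ(E) nowhere vanishing, Π : TM → H the projection determined by ξ₀ as in the construction of the underlying partial Weyl structure, and α ∈ Ω¹(M) the one-form with Π_E = α ξ₀. Then the partial connections ∇^E, ∇^V, ∇^{ι(Q)} determined by ξ₀ extend uniquely to full linear connections by requiring ∇^E ξ₀ = 0 and, for η, η̃ ∈ Γ(V) and ζ = ι(𝓛(ξ₀,η)): ∇^V_ζ η̃ = Π_V([ζ,η̃]) + ½ α([ξ₀,[ξ₀,η̃]]) η, and ∇^{ι(Q)} ζ = ι(𝓛(ξ₀, ∇^V η)). The resulting pair (∇,Π), with ∇ the direct sum connection on TM = E ⊕ V ⊕ ι(Q), satisfies all the characterizing conditions of the Weyl structure associated to ξ₀ (E, V, ι(Q) parallel, ∇ξ₀ = 0, ι∘𝓛 parallel, τ(E,V) ⊂ ι(Q), τ(H,ι(Q)) ⊂ H, and 𝓛(τ(ξ₀,ζ₁),η₂) = 2𝓛(ξ₀,τ(η₁,ζ₂)) for ζᵢ = ι(𝓛(ξ₀,ηᵢ))) and is uniquely determined by them. -/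

import Mathlib

/-!
The scale `ξ₀` trivializes `E`, so the Levi isomorphism `E ⊗ V ≅ Q` turns `η ↦ 𝓛(ξ₀, η)` into a
`C`-linear bijection `V → Q` (`levi_scale_surj`, `levi_scale_inj`). Identities in `V` are therefore
tested after applying `𝓛(ξ₀, ·)`, and `TM = E ⊕ V ⊕ ι(Q)` reduces everything to the three cases
`ξ₀`, `η` and `ι(𝓛(ξ₀, η))`.

A connection extending the partial one is determined by the extension formulas on these three
summands (`ExtendsPartialWeyl.eq`). Conversely the formulas define a connection
(`exists_extension`); the only delicate point is the Leibniz rule for the correction term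
`½ α([ξ₀,[ξ₀,η̃]]) η`, which holds because `α` vanishes on `V` and on `[ξ₀, V]`.

The conditions on Weyl structures match the formulas one by one. For `ψ ∈ H` the condition
`τ(H, ι(Q)) ⊂ H` reads `𝓛(ξ₀, ∇_ψ η) = q([ψ, ι(𝓛(ξ₀, η))])`, which holds for the partial Weyl
structure (`PartialWeylData.levi_cov`) and determines `∇` in `H`-directions. Given parallelity and
this torsion condition, the normalization of the torsion is equivalent to the formula for `∇^V` in
`ι(Q)`-directions (`Conn.norm_iff`). Hence an extension is a Weyl structure. Conversely, any Weyl
structure for `ξ₀` has the same splitting (`WeylStructure.ι_eq`), so its connection is an extension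
(`WeylStructure.extendsPartialWeyl`) and uniqueness of extensions applies.
-/


/-!
An algebraic model of the smooth calculus on a smooth manifold `M`:
`C` plays the role of the algebra `C^∞(M,ℝ)` of smooth functions and `X` plays the
role of the `C^∞(M,ℝ)`-module `𝔛(M)` of smooth vector fields, together with the Lie
bracket of vector fields and the derivative of functions along vector fields
(i.e. a Lie–Rinehart algebra over `ℝ`).  Distributions (smooth subbundles of `TM`)
are modelled as `C`-submodules of `X`, linear connections on `TM` as operators
`X → X → X` with the usual tensoriality and Leibniz properties, and one-forms as
`C`-linear maps `X →ₗ[C] C`.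
-/

open scoped TensorProduct

/-- The algebra of smooth functions together with the module of smooth vector
fields on a smooth manifold, with the Lie bracket and directional derivative. -/
structure VFCalc where
  /-- the smooth functions `C^∞(M,ℝ)` -/
  C : Type
  /-- the smooth vector fields `𝔛(M)` -/
  X : Type
  [ringC : CommRing C]
  [algC : Algebra ℝ C]
  [grpX : AddCommGroup X]
  [modX : Module C X]
  /-- the Lie bracket of vector fields -/
  lie : X → X → X
  /-- the derivative `D ψ f = ψ · f` of a function along a vector field -/
  D : X → C → C
  lie_add_left : ∀ ψ₁ ψ₂ φ, lie (ψ₁ + ψ₂) φ = lie ψ₁ φ + lie ψ₂ φ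
  lie_skew : ∀ ψ φ, lie φ ψ = - lie ψ φ
  jacobi : ∀ ψ₁ ψ₂ ψ₃, lie ψ₁ (lie ψ₂ ψ₃) = lie (lie ψ₁ ψ₂) ψ₃ + lie ψ₂ (lie ψ₁ ψ₃)
  lie_smul_right : ∀ (f : C) (ψ φ : X), lie ψ (f • φ) = f • lie ψ φ + (D ψ f) • φ
  D_add_left : ∀ ψ₁ ψ₂ f, D (ψ₁ + ψ₂) f = D ψ₁ f + D ψ₂ f
  D_smul_left : ∀ (g : C) ψ f, D (g • ψ) f = g * D ψ f
  D_add_right : ∀ ψ f₁ f₂, D ψ (f₁ + f₂) = D ψ f₁ + D ψ f₂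
  D_mul_right : ∀ ψ f₁ f₂, D ψ (f₁ * f₂) = f₁ * D ψ f₂ + f₂ * D ψ f₁
  D_algebraMap : ∀ ψ r, D ψ (algebraMap ℝ C r) = 0

attribute [instance] VFCalc.ringC VFCalc.algC VFCalc.grpX VFCalc.modX

/-- the exterior derivative of a one-form, `dα(ψ,φ) = ψ·α(φ) − φ·α(ψ) − α([ψ,φ])` -/
def VFCalc.dform (P : VFCalc) (α : P.X →ₗ[P.C] P.C) (ψ φ : P.X) : P.C :=
  P.D ψ (α φ) - P.D φ (α ψ) - α (P.lie ψ φ)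

/-- A (generalized) path geometry on a manifold `M` of dimension `2n+1`:
distributions `E, V ⊂ TM` (of rank `1` and `n`) with `E ∩ V = 0`, `V` involutive,
such that the Levi bracket induces an isomorphism `E ⊗ V ≅ Q := TM/(E ⊕ V)`. -/
structure PathGeometry extends VFCalc where
  /-- the rank one distribution `E` -/
  E : Submodule C X
  /-- the rank `n` distribution `V` -/
  V : Submodule C X
  inf_bot : E ⊓ V = ⊥
  involutive : ∀ η₁ ∈ V, ∀ η₂ ∈ V, lie η₁ η₂ ∈ V
  /-- the Levi bracket `E ⊗ V → Q = TM/(E ⊔ V)` is an isomorphism of bundles -/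
  leviIso : (↥E ⊗[C] ↥V) ≃ₗ[C] (X ⧸ (E ⊔ V))
  leviIso_apply : ∀ (ξ : ↥E) (η : ↥V),
    leviIso (ξ ⊗ₜ[C] η) = Submodule.Quotient.mk (lie (ξ : X) (η : X))

namespace PathGeometry

variable (P : PathGeometry)

/-- the corank one distribution `H = E ⊕ V` -/
def H : Submodule P.C P.X := P.E ⊔ P.V

/-- the quotient bundle `Q = TM/H` -/
abbrev Q := P.X ⧸ P.H

/-- the quotient projection `q : TM → Q` -/
def q : P.X →ₗ[P.C] P.Q := P.H.mkQ

/-- the Levi bracket `𝓛(ψ,φ) = q([ψ,φ])` -/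
def levi (ψ φ : P.X) : P.Q := P.q (P.lie ψ φ)

/-- the constant function `½` -/
noncomputable def half : P.C := algebraMap ℝ P.C (1/2)

/-- A (local) scale: a nowhere vanishing smooth section `ξ₀` of the line bundle `E`,
i.e. a trivialization of `E`, modelled as a basis of `E` as free rank one module. -/
structure IsScale (ξ₀ : P.X) : Prop where
  mem : ξ₀ ∈ P.E
  span : ∀ ξ ∈ P.E, ∃ f : P.C, ξ = f • ξ₀
  basis : ∀ f : P.C, f • ξ₀ = 0 → f = 0

end PathGeometry

/-- A linear connection on `TM`. -/
structure Conn (P : VFCalc) where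
  /-- the covariant derivative `cov ψ φ = ∇_ψ φ` -/
  cov : P.X → P.X → P.X
  add_left : ∀ ψ₁ ψ₂ φ, cov (ψ₁ + ψ₂) φ = cov ψ₁ φ + cov ψ₂ φ
  smul_left : ∀ (f : P.C) ψ φ, cov (f • ψ) φ = f • cov ψ φ
  add_right : ∀ ψ φ₁ φ₂, cov ψ (φ₁ + φ₂) = cov ψ φ₁ + cov ψ φ₂
  leibniz : ∀ (f : P.C) ψ φ, cov ψ (f • φ) = f • cov ψ φ + (P.D ψ f) • φ

namespace Conn

variable {P : VFCalc} (cn : Conn P)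

/-- the torsion `τ(ψ₁,ψ₂) = ∇_{ψ₁}ψ₂ − ∇_{ψ₂}ψ₁ − [ψ₁,ψ₂]` -/
def torsion (ψ₁ ψ₂ : P.X) : P.X := cn.cov ψ₁ ψ₂ - cn.cov ψ₂ ψ₁ - P.lie ψ₁ ψ₂

/-- the curvature `R(ψ₁,ψ₂)(ψ₃) = ∇_{ψ₁}∇_{ψ₂}ψ₃ − ∇_{ψ₂}∇_{ψ₁}ψ₃ − ∇_{[ψ₁,ψ₂]}ψ₃` -/
def curv (ψ₁ ψ₂ ψ₃ : P.X) : P.X :=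
  cn.cov ψ₁ (cn.cov ψ₂ ψ₃) - cn.cov ψ₂ (cn.cov ψ₁ ψ₃) - cn.cov (P.lie ψ₁ ψ₂) ψ₃

end Conn

/-- The Weyl structure associated to a scale `ξ₀`: a linear connection `∇` on `TM`
together with a decomposition `TM = E ⊕ V ⊕ ι(Q)` (encoded by the splitting
`ι : Q → TM` of `q`) such that `E`, `V`, `ι(Q)` are parallel, `∇ξ₀ = 0`,
`ι ∘ 𝓛 : E ⊗ V → ι(Q)` is parallel, the torsion satisfies `τ(E,V) ⊂ ι(Q)`,
`τ(H,ι(Q)) ⊂ H` and the normalization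
`𝓛(τ(ξ₀,ζ₁),η₂) = 2𝓛(ξ₀,τ(η₁,ζ₂))` for `ζᵢ = ι(𝓛(ξ₀,ηᵢ))`. -/
structure WeylStructure (P : PathGeometry) (ξ₀ : P.X) where
  conn : Conn P.toVFCalc
  ι : P.Q →ₗ[P.C] P.X
  q_ι : ∀ w, P.q (ι w) = w
  parE : ∀ ψ : P.X, ∀ ξ ∈ P.E, conn.cov ψ ξ ∈ P.E
  parV : ∀ ψ : P.X, ∀ η ∈ P.V, conn.cov ψ η ∈ P.V
  parQ : ∀ (ψ : P.X) (w : P.Q), conn.cov ψ (ι w) ∈ LinearMap.range ι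
  parScale : ∀ ψ : P.X, conn.cov ψ ξ₀ = 0
  parLevi : ∀ ψ : P.X, ∀ ξ ∈ P.E, ∀ η ∈ P.V,
    conn.cov ψ (ι (P.levi ξ η)) = ι (P.levi (conn.cov ψ ξ) η) + ι (P.levi ξ (conn.cov ψ η))
  torsEV : ∀ ξ ∈ P.E, ∀ η ∈ P.V, conn.torsion ξ η ∈ LinearMap.range ι
  torsHQ : ∀ ψ ∈ P.H, ∀ w : P.Q, conn.torsion ψ (ι w) ∈ P.H
  norm : ∀ η₁ ∈ P.V, ∀ η₂ ∈ P.V,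
    P.levi (conn.torsion ξ₀ (ι (P.levi ξ₀ η₁))) η₂
      = (2 : P.C) • P.levi ξ₀ (conn.torsion η₁ (ι (P.levi ξ₀ η₂)))

/-- The underlying data of a "partial Weyl structure": a splitting `ι : Q → TM` of `q`
(equivalently a decomposition `TM = E ⊕ V ⊕ ι(Q)` with projections `PiE`, `PiV` onto the
`E`- and `V`-components), together with a partial linear connection on `TM`, i.e. an
operator `Γ(H) × 𝔛(M) → 𝔛(M)` which is tensorial in the first variable and satisfies
the Leibniz rule in the second variable. -/
structure PartialWeylData (P : PathGeometry) where
  /-- the partial covariant derivative, defined for directions in `H` only -/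
  cov : ↥P.H → P.X → P.X
  cov_add_left : ∀ (ψ₁ ψ₂ : ↥P.H) (φ : P.X), cov (ψ₁ + ψ₂) φ = cov ψ₁ φ + cov ψ₂ φ
  cov_smul_left : ∀ (f : P.C) (ψ : ↥P.H) (φ : P.X), cov (f • ψ) φ = f • cov ψ φ
  cov_add_right : ∀ (ψ : ↥P.H) (φ₁ φ₂ : P.X), cov ψ (φ₁ + φ₂) = cov ψ φ₁ + cov ψ φ₂
  cov_leibniz : ∀ (f : P.C) (ψ : ↥P.H) (φ : P.X),
    cov ψ (f • φ) = f • cov ψ φ + (P.D (ψ : P.X) f) • φ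
  /-- the splitting `ι : Q → TM` of `q`, whose image is the chosen complement of `H` -/
  ι : P.Q →ₗ[P.C] P.X
  q_ι : ∀ w, P.q (ι w) = w
  /-- the `E`-component `Π_E` of the projection `Π : TM → H` along `ι(Q)` -/
  PiE : P.X →ₗ[P.C] P.X
  /-- the `V`-component `Π_V` of the projection `Π : TM → H` along `ι(Q)` -/
  PiV : P.X →ₗ[P.C] P.X
  PiE_mem : ∀ ψ, PiE ψ ∈ P.E
  PiV_mem : ∀ ψ, PiV ψ ∈ P.V
  decomp : ∀ ψ, ψ = PiE ψ + PiV ψ + ι (P.q ψ)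

/-- The defining equations (the five displayed equations of Proposition 2.3) for the
partial Weyl structure associated to a scale `ξ₀`.  (Any `ξ ∈ Γ(E)` is of the form
`f • ξ₀`, so the equations involving a general section `ξ` of `E` are formulated either
for `ξ = f • ξ₀` or for directions `ψ ∈ H` lying in `E`.) -/
structure SatisfiesEqs (P : PathGeometry) (ξ₀ : P.X) (W : PartialWeylData P) : Prop where
  /-- `∇^E ξ = df ⊗ ξ₀` for `ξ = f ξ₀` -/
  eqE : ∀ (ψ : ↥P.H) (f : P.C), W.cov ψ (f • ξ₀) = (P.D (ψ : P.X) f) • ξ₀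
  /-- `∇^V` takes values in `V` -/
  memV : ∀ (ψ : ↥P.H), ∀ η ∈ P.V, W.cov ψ η ∈ P.V
  /-- `𝓛(ξ₀, ∇^V_ξ η) = 𝓛(ξ₀, Π_V([ξ,η])) = ½ q([ξ,[ξ₀,η]])` for `ξ ∈ Γ(E)` -/
  eqVE : ∀ (ψ : ↥P.H), (ψ : P.X) ∈ P.E → ∀ η ∈ P.V,
    P.levi ξ₀ (W.cov ψ η) = P.half • P.q (P.lie (ψ : P.X) (P.lie ξ₀ η)) ∧
    P.levi ξ₀ (W.PiV (P.lie (ψ : P.X) η)) = P.half • P.q (P.lie (ψ : P.X) (P.lie ξ₀ η))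
  /-- `Π_E([ξ,η]) = −df(η) ξ₀` for `ξ = f ξ₀` -/
  eqPiE : ∀ (f : P.C), ∀ η ∈ P.V, W.PiE (P.lie (f • ξ₀) η) = -((P.D η f) • ξ₀)
  /-- `𝓛(ξ₀, ∇^V_{η₁} η₂) = q([η₁,[ξ₀,η₂]])` -/
  eqVV : ∀ (ψ : ↥P.H), (ψ : P.X) ∈ P.V → ∀ η ∈ P.V,
    P.levi ξ₀ (W.cov ψ η) = P.q (P.lie (ψ : P.X) (P.lie ξ₀ η))
  /-- `∇^{ι(Q)} ι(𝓛(ξ,η)) = ι(𝓛(∇^E ξ, η) + 𝓛(ξ, ∇^V η))` -/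
  eqQ : ∀ (ψ : ↥P.H), ∀ ξ ∈ P.E, ∀ η ∈ P.V,
    W.cov ψ (W.ι (P.levi ξ η)) =
      W.ι (P.levi (W.cov ψ ξ) η + P.levi ξ (W.cov ψ η))

/-- The structural conditions on a partial Weyl structure: conditions (i), (ii) and the
first two torsion conditions of (iii) of Theorem 2.2, in the form available for partial
connections: `E`, `V` and `ι(Q)` are parallel, `∇ξ₀ = 0`, `ι ∘ 𝓛` is parallel,
`τ(E,V) ⊂ ι(Q)`, and `τ(H,ι(Q)) ⊂ H` (for a partial connection the derivatives in
`ι(Q)`-directions are not defined, but they preserve `H`, so the condition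
`τ(H,ι(Q)) ⊂ H` is equivalent to `q(∇_ψ ι(w) − [ψ, ι(w)]) = 0` for `ψ ∈ H`). -/
structure StructuralProps (P : PathGeometry) (ξ₀ : P.X) (W : PartialWeylData P) : Prop where
  parE : ∀ (ψ : ↥P.H), ∀ ξ ∈ P.E, W.cov ψ ξ ∈ P.E
  parV : ∀ (ψ : ↥P.H), ∀ η ∈ P.V, W.cov ψ η ∈ P.V
  parQ : ∀ (ψ : ↥P.H) (w : P.Q), W.cov ψ (W.ι w) ∈ LinearMap.range W.ι
  parScale : ∀ (ψ : ↥P.H), W.cov ψ ξ₀ = 0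
  parLevi : ∀ (ψ : ↥P.H), ∀ ξ ∈ P.E, ∀ η ∈ P.V,
    W.cov ψ (W.ι (P.levi ξ η)) = W.ι (P.levi (W.cov ψ ξ) η + P.levi ξ (W.cov ψ η))
  torsEV : ∀ (ψ χ : ↥P.H), (ψ : P.X) ∈ P.E → (χ : P.X) ∈ P.V →
    W.cov ψ (χ : P.X) - W.cov χ (ψ : P.X) - P.lie (ψ : P.X) (χ : P.X) ∈ LinearMap.range W.ι
  torsHQ : ∀ (ψ : ↥P.H) (w : P.Q),
    P.q (W.cov ψ (W.ι w)) = P.q (P.lie (ψ : P.X) (W.ι w))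

/-- The conditions of Proposition 2.5 on a full linear connection extending a partial
Weyl structure `W`: it agrees with `W` in `H`-directions, `∇^E ξ₀ = 0`, the subbundles
`E`, `V` and `ι(Q)` remain parallel, and the two displayed extension formulas
`∇^V_ζ η̃ = Π_V([ζ,η̃]) + ½ α([ξ₀,[ξ₀,η̃]]) η` (for `ζ = ι(𝓛(ξ₀,η))`) and
`∇^{ι(Q)} ζ = ι(𝓛(ξ₀, ∇^V η))` (in `ι(Q)`-directions) hold. -/
def ExtendsPartialWeyl (P : PathGeometry) (ξ₀ : P.X) (W : PartialWeylData P)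
    (α : P.X →ₗ[P.C] P.C) (cn : Conn P.toVFCalc) : Prop :=
  (∀ (ψ : ↥P.H) (φ : P.X), cn.cov (ψ : P.X) φ = W.cov ψ φ) ∧
  (∀ ψ : P.X, cn.cov ψ ξ₀ = 0) ∧
  (∀ ψ : P.X, ∀ ξ ∈ P.E, cn.cov ψ ξ ∈ P.E) ∧
  (∀ ψ : P.X, ∀ η ∈ P.V, cn.cov ψ η ∈ P.V) ∧
  (∀ (ψ : P.X) (w : P.Q), cn.cov ψ (W.ι w) ∈ LinearMap.range W.ι) ∧
  (∀ η ∈ P.V, ∀ η' ∈ P.V,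
    cn.cov (W.ι (P.levi ξ₀ η)) η' =
      W.PiV (P.lie (W.ι (P.levi ξ₀ η)) η') +
        (P.half * α (P.lie ξ₀ (P.lie ξ₀ η'))) • η) ∧
  (∀ (w : P.Q), ∀ η ∈ P.V,
    cn.cov (W.ι w) (W.ι (P.levi ξ₀ η)) = W.ι (P.levi ξ₀ (cn.cov (W.ι w) η)))

namespace PathGeometry

variable {P : PathGeometry} {ξ₀ : P.X}

/-! ### Calculus of brackets and the Levi bracket -/

lemma lie_add_right (ψ φ₁ φ₂ : P.X) :
    P.lie ψ (φ₁ + φ₂) = P.lie ψ φ₁ + P.lie ψ φ₂ := by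
  rw [P.lie_skew (φ₁ + φ₂) ψ, P.lie_add_left, P.lie_skew φ₁ ψ, P.lie_skew φ₂ ψ]
  abel

lemma lie_smul_left (f : P.C) (ψ φ : P.X) :
    P.lie (f • ψ) φ = f • P.lie ψ φ - (P.D φ f) • ψ := by
  rw [P.lie_skew φ (f • ψ), P.lie_smul_right, P.lie_skew ψ φ, smul_neg]
  abel

lemma D_one (ψ : P.X) : P.D ψ 1 = 0 := by
  simpa using P.D_algebraMap ψ 1

lemma half_add_half : P.half + P.half = 1 := by
  rw [half, ← map_add]
  norm_num

lemma half_mul_two : P.half * 2 = 1 := by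
  rw [mul_two, half_add_half]

lemma lie_self (ψ : P.X) : P.lie ψ ψ = 0 := by
  have h : P.lie ψ ψ + P.lie ψ ψ = 0 := by
    nth_rewrite 1 [P.lie_skew ψ ψ]
    exact neg_add_cancel _
  rw [← one_smul P.C (P.lie ψ ψ), ← half_add_half, add_smul, ← smul_add, h, smul_zero]

lemma q_eq_zero_iff {x : P.X} : P.q x = 0 ↔ x ∈ P.H :=
  Submodule.Quotient.mk_eq_zero _

lemma E_le_H {x : P.X} (h : x ∈ P.E) : x ∈ P.H := Submodule.mem_sup_left h

lemma V_le_H {x : P.X} (h : x ∈ P.V) : x ∈ P.H := Submodule.mem_sup_right h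

lemma q_E {x : P.X} (h : x ∈ P.E) : P.q x = 0 := q_eq_zero_iff.2 (E_le_H h)

lemma q_V {x : P.X} (h : x ∈ P.V) : P.q x = 0 := q_eq_zero_iff.2 (V_le_H h)

lemma levi_add_right (ψ φ₁ φ₂ : P.X) :
    P.levi ψ (φ₁ + φ₂) = P.levi ψ φ₁ + P.levi ψ φ₂ := by
  simp only [levi, lie_add_right, map_add]

lemma levi_add_left (ψ₁ ψ₂ φ : P.X) :
    P.levi (ψ₁ + ψ₂) φ = P.levi ψ₁ φ + P.levi ψ₂ φ := by
  simp only [levi, P.lie_add_left, map_add]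

lemma levi_zero_right (ψ : P.X) : P.levi ψ 0 = 0 := by
  simpa using levi_add_right ψ (0 : P.X) 0

lemma levi_zero_left (φ : P.X) : P.levi 0 φ = 0 := by
  simpa using levi_add_left (0 : P.X) 0 φ

lemma levi_smul_right (f : P.C) (ψ : P.X) {φ : P.X} (h : φ ∈ P.H) :
    P.levi ψ (f • φ) = f • P.levi ψ φ := by
  simp only [levi, P.lie_smul_right, map_add, map_smul, q_eq_zero_iff.2 h, smul_zero, add_zero]

lemma levi_smul_left (f : P.C) {ψ : P.X} (φ : P.X) (h : ψ ∈ P.H) :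
    P.levi (f • ψ) φ = f • P.levi ψ φ := by
  simp only [levi, lie_smul_left, map_sub, map_smul, q_eq_zero_iff.2 h, smul_zero, sub_zero]

lemma levi_V {η₁ η₂ : P.X} (h₁ : η₁ ∈ P.V) (h₂ : η₂ ∈ P.V) : P.levi η₁ η₂ = 0 :=
  q_V (P.involutive η₁ h₁ η₂ h₂)

lemma levi_scale_E (hξ₀ : P.IsScale ξ₀) {ξ : P.X} (h : ξ ∈ P.E) : P.levi ξ₀ ξ = 0 := by
  obtain ⟨f, rfl⟩ := hξ₀.span ξ h
  rw [levi_smul_right _ _ (E_le_H hξ₀.mem), levi, lie_self, map_zero, smul_zero]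

/-- A scale trivializes `E`, so the Levi isomorphism `E ⊗ V ≅ Q` makes every section of `Q`
of the form `𝓛(ξ₀, η)`. -/
lemma levi_scale_surj (hξ₀ : P.IsScale ξ₀) (w : P.Q) : ∃ η ∈ P.V, P.levi ξ₀ η = w := by
  obtain ⟨t, rfl⟩ : ∃ t, P.leviIso t = w := P.leviIso.surjective w
  induction t using TensorProduct.induction_on with
  | zero => exact ⟨0, P.V.zero_mem, (levi_zero_right ξ₀).trans (map_zero P.leviIso).symm⟩
  | tmul ξ η =>
    obtain ⟨f, hf⟩ := hξ₀.span ξ ξ.2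
    refine ⟨f • η, P.V.smul_mem f η.2, ?_⟩
    rw [P.leviIso_apply, hf, levi_smul_right _ _ (V_le_H η.2),
      ← levi_smul_left _ _ (E_le_H hξ₀.mem)]
    rfl
  | add a b ha hb =>
    obtain ⟨x, hx, hx'⟩ := ha
    obtain ⟨y, hy, hy'⟩ := hb
    exact ⟨x + y, P.V.add_mem hx hy, by rw [levi_add_right, hx', hy', map_add]; rfl⟩

end PathGeometry

section

open PathGeometry

variable {P : PathGeometry} {ξ₀ : P.X} {W : PartialWeylData P} {α : P.X →ₗ[P.C] P.C}

/-! ### The projections onto `E`, `V` and `ι(Q)` -/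

namespace PartialWeylData

lemma Pi_of_mem_E {ξ : P.X} (h : ξ ∈ P.E) : W.PiE ξ = ξ ∧ W.PiV ξ = 0 := by
  have hd := W.decomp ξ
  rw [q_E h, map_zero, add_zero] at hd
  have h1 : W.PiV ξ = ξ - W.PiE ξ := by rw [eq_sub_iff_add_eq', ← hd]
  have h2 : W.PiV ξ ∈ P.E ⊓ P.V :=
    ⟨by rw [h1]; exact P.E.sub_mem h (W.PiE_mem ξ), W.PiV_mem ξ⟩
  rw [P.inf_bot, Submodule.mem_bot] at h2
  rw [h2, add_zero] at hd
  exact ⟨hd.symm, h2⟩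

lemma Pi_of_mem_V {η : P.X} (h : η ∈ P.V) : W.PiE η = 0 ∧ W.PiV η = η := by
  have hd := W.decomp η
  rw [q_V h, map_zero, add_zero] at hd
  have h1 : W.PiE η = η - W.PiV η := by rw [eq_sub_iff_add_eq, ← hd]
  have h2 : W.PiE η ∈ P.E ⊓ P.V :=
    ⟨W.PiE_mem η, by rw [h1]; exact P.V.sub_mem h (W.PiV_mem η)⟩
  rw [P.inf_bot, Submodule.mem_bot] at h2
  rw [h2, zero_add] at hd
  exact ⟨h2, hd.symm⟩

lemma Pi_ι (w : P.Q) : W.PiE (W.ι w) = 0 ∧ W.PiV (W.ι w) = 0 := by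
  have hd := W.decomp (W.ι w)
  rw [W.q_ι, right_eq_add] at hd
  have h1 : W.PiE (W.ι w) = -W.PiV (W.ι w) := eq_neg_of_add_eq_zero_left hd
  have h2 : W.PiE (W.ι w) ∈ P.E ⊓ P.V :=
    ⟨W.PiE_mem _, by rw [h1]; exact P.V.neg_mem (W.PiV_mem _)⟩
  rw [P.inf_bot, Submodule.mem_bot] at h2
  rw [h2, zero_add] at hd
  exact ⟨h2, hd⟩

lemma alpha_of_PiE (hξ₀ : P.IsScale ξ₀) (hα : ∀ ψ : P.X, W.PiE ψ = α ψ • ξ₀) {x : P.X}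
    (h : W.PiE x = 0) : α x = 0 :=
  hξ₀.basis _ (by rw [← hα, h])

lemma alpha_V (hξ₀ : P.IsScale ξ₀) (hα : ∀ ψ : P.X, W.PiE ψ = α ψ • ξ₀) {η : P.X}
    (h : η ∈ P.V) : α η = 0 :=
  alpha_of_PiE hξ₀ hα (Pi_of_mem_V h).1

lemma alpha_ι (hξ₀ : P.IsScale ξ₀) (hα : ∀ ψ : P.X, W.PiE ψ = α ψ • ξ₀) (w : P.Q) :
    α (W.ι w) = 0 :=
  alpha_of_PiE hξ₀ hα (Pi_ι w).1

lemma alpha_scale (hξ₀ : P.IsScale ξ₀) (hα : ∀ ψ : P.X, W.PiE ψ = α ψ • ξ₀) : α ξ₀ = 1 := by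
  have h := (Pi_of_mem_E (W := W) hξ₀.mem).1
  rw [hα] at h
  rw [← sub_eq_zero]
  exact hξ₀.basis _ (by rw [sub_smul, h, one_smul, sub_self])

lemma decomp' (hα : ∀ ψ : P.X, W.PiE ψ = α ψ • ξ₀) (x : P.X) :
    x = α x • ξ₀ + W.PiV x + W.ι (P.q x) := by
  rw [← hα]
  exact W.decomp x

lemma decomp_H (hα : ∀ ψ : P.X, W.PiE ψ = α ψ • ξ₀) {x : P.X} (h : x ∈ P.H) :
    x = α x • ξ₀ + W.PiV x := by
  have h' := decomp' hα x
  rwa [q_eq_zero_iff.2 h, map_zero, add_zero] at h'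

/-- Contracting the first factor of `ξ₀ ⊗ η` with `α` recovers `η`, so the Levi isomorphism
makes `η ↦ 𝓛(ξ₀, η)` injective on `V`. -/
lemma levi_scale_inj (hξ₀ : P.IsScale ξ₀) (hα : ∀ ψ : P.X, W.PiE ψ = α ψ • ξ₀) {η η' : P.X}
    (h : η ∈ P.V) (h' : η' ∈ P.V) (e : P.levi ξ₀ η = P.levi ξ₀ η') : η = η' := by
  have e' : (⟨ξ₀, hξ₀.mem⟩ : P.E) ⊗ₜ[P.C] (⟨η, h⟩ : P.V)
      = (⟨ξ₀, hξ₀.mem⟩ : P.E) ⊗ₜ[P.C] (⟨η', h'⟩ : P.V) := by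
    apply P.leviIso.injective
    rw [P.leviIso_apply, P.leviIso_apply]
    exact e
  have e'' := congrArg
    (fun t => TensorProduct.lid P.C P.V (LinearMap.rTensor P.V (α.domRestrict P.E) t)) e'
  simpa [alpha_scale hξ₀ hα] using e''

lemma levi_H_left (hξ₀ : P.IsScale ξ₀) (hα : ∀ ψ : P.X, W.PiE ψ = α ψ • ξ₀) {x η : P.X}
    (h : x ∈ P.H) (hη : η ∈ P.V) : P.levi x η = α x • P.levi ξ₀ η := by
  conv_lhs => rw [decomp_H hα h]
  rw [levi_add_left, levi_smul_left _ _ (E_le_H hξ₀.mem), levi_V (W.PiV_mem x) hη, add_zero]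

lemma levi_H_right (hξ₀ : P.IsScale ξ₀) (hα : ∀ ψ : P.X, W.PiE ψ = α ψ • ξ₀) {x : P.X}
    (h : x ∈ P.H) : P.levi ξ₀ x = P.levi ξ₀ (W.PiV x) := by
  conv_lhs => rw [decomp_H hα h]
  rw [levi_add_right, levi_scale_E hξ₀ (P.E.smul_mem _ hξ₀.mem), zero_add]

/-! ### Consequences of the equations of the partial Weyl structure -/

lemma alpha_lie_scale (hξ₀ : P.IsScale ξ₀) (hW : SatisfiesEqs P ξ₀ W)
    (hα : ∀ ψ : P.X, W.PiE ψ = α ψ • ξ₀) {η : P.X} (h : η ∈ P.V) :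
    α (P.lie ξ₀ η) = 0 := by
  have h1 := hW.eqPiE 1 η h
  rw [D_one, zero_smul, neg_zero, one_smul] at h1
  exact alpha_of_PiE hξ₀ hα h1

lemma lie_scale (hξ₀ : P.IsScale ξ₀) (hW : SatisfiesEqs P ξ₀ W)
    (hα : ∀ ψ : P.X, W.PiE ψ = α ψ • ξ₀) {η : P.X} (h : η ∈ P.V) :
    P.lie ξ₀ η = W.PiV (P.lie ξ₀ η) + W.ι (P.levi ξ₀ η) := by
  have h1 := decomp' hα (P.lie ξ₀ η)
  rwa [alpha_lie_scale hξ₀ hW hα h, zero_smul, zero_add] at h1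

lemma levi_PiV_lie (hξ₀ : P.IsScale ξ₀) (hW : SatisfiesEqs P ξ₀ W) {η : P.X} (h : η ∈ P.V) :
    P.levi ξ₀ (W.PiV (P.lie ξ₀ η)) = P.half • P.q (P.lie ξ₀ (P.lie ξ₀ η)) :=
  (hW.eqVE ⟨ξ₀, E_le_H hξ₀.mem⟩ hξ₀.mem η h).2

/-- The torsion condition `τ(H, ι(Q)) ⊂ H` in the form `𝓛(ξ₀, ∇_ψ η) = q([ψ, ι(𝓛(ξ₀, η))])`,
which determines `∇_ψ η` for all `ψ ∈ H` at once. -/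
lemma levi_cov (hξ₀ : P.IsScale ξ₀) (hW : SatisfiesEqs P ξ₀ W)
    (hα : ∀ ψ : P.X, W.PiE ψ = α ψ • ξ₀) (ψ : P.H) {η : P.X} (h : η ∈ P.V) :
    P.levi ξ₀ (W.cov ψ η) = P.levi ψ (W.ι (P.levi ξ₀ η)) := by
  have hι (φ : P.X) : P.q (P.lie φ (P.lie ξ₀ η))
      = P.levi φ (W.PiV (P.lie ξ₀ η)) + P.levi φ (W.ι (P.levi ξ₀ η)) := by
    rw [← levi_add_right, ← lie_scale hξ₀ hW hα h, levi]
  have hE : P.levi ξ₀ (W.cov ⟨ξ₀, E_le_H hξ₀.mem⟩ η) = P.levi ξ₀ (W.ι (P.levi ξ₀ η)) := by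
    rw [(hW.eqVE ⟨ξ₀, E_le_H hξ₀.mem⟩ hξ₀.mem η h).1]
    have h1 := hι ξ₀
    rw [levi_PiV_lie hξ₀ hW h] at h1
    rw [← sub_eq_iff_eq_add'] at h1
    rw [← h1, eq_sub_iff_add_eq, ← add_smul, half_add_half, one_smul]
  have hV (η₁ : P.X) (h₁ : η₁ ∈ P.V) :
      P.levi ξ₀ (W.cov ⟨η₁, V_le_H h₁⟩ η) = P.levi η₁ (W.ι (P.levi ξ₀ η)) := by
    rw [hW.eqVV ⟨η₁, V_le_H h₁⟩ h₁ η h]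
    simp only [hι, levi_V h₁ (W.PiV_mem _), zero_add]
  have hψ : ψ = α ψ • (⟨ξ₀, E_le_H hξ₀.mem⟩ : P.H) + ⟨W.PiV ψ, V_le_H (W.PiV_mem _)⟩ :=
    Subtype.ext (decomp_H hα ψ.2)
  conv_lhs => rw [hψ]
  conv_rhs => rw [hψ]
  rw [W.cov_add_left, W.cov_smul_left, levi_add_right, Submodule.coe_add, levi_add_left,
    levi_smul_right _ _ (V_le_H (hW.memV _ _ h)), Submodule.coe_smul,
    levi_smul_left _ _ (E_le_H hξ₀.mem), hE, hV _ (W.PiV_mem _)]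

lemma cov_scale (hW : SatisfiesEqs P ξ₀ W) (ψ : P.H) : W.cov ψ ξ₀ = 0 := by
  simpa [D_one] using hW.eqE ψ 1

lemma cov_ι_levi (hξ₀ : P.IsScale ξ₀) (hW : SatisfiesEqs P ξ₀ W) (ψ : P.H) {η : P.X}
    (h : η ∈ P.V) : W.cov ψ (W.ι (P.levi ξ₀ η)) = W.ι (P.levi ξ₀ (W.cov ψ η)) := by
  rw [hW.eqQ ψ ξ₀ hξ₀.mem η h, cov_scale hW, levi_zero_left, zero_add]

end PartialWeylData

open PartialWeylData

namespace Conn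

lemma cov_zero_right (cn : Conn P.toVFCalc) (ψ : P.X) : cn.cov ψ 0 = 0 := by
  simpa using cn.add_right ψ 0 0

lemma cov_E (hξ₀ : P.IsScale ξ₀) (cn : Conn P.toVFCalc) (hs : ∀ ψ, cn.cov ψ ξ₀ = 0) (ψ : P.X)
    {ξ : P.X} (h : ξ ∈ P.E) : cn.cov ψ ξ ∈ P.E := by
  obtain ⟨f, rfl⟩ := hξ₀.span ξ h
  rw [cn.leibniz, hs, smul_zero, zero_add]
  exact P.E.smul_mem _ hξ₀.mem

/-- The normalization `𝓛(τ(ξ₀,ζ₁),η₂) = 2𝓛(ξ₀,τ(η₁,ζ₂))` says precisely that `∇^V` in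
`ι(Q)`-directions is given by the extension formula: on the left only the `E`-component
`-α([ξ₀,ζ₁]) = -α([ξ₀,[ξ₀,η₁]])` of the torsion enters, on the right only the `V`-component
`Π_V([ζ₂,η₁]) - ∇_{ζ₂}η₁`. -/
lemma norm_iff (hξ₀ : P.IsScale ξ₀) (hW : SatisfiesEqs P ξ₀ W)
    (hα : ∀ ψ : P.X, W.PiE ψ = α ψ • ξ₀) (cn : Conn P.toVFCalc)
    (hs : ∀ ψ, cn.cov ψ ξ₀ = 0) (hV : ∀ ψ, ∀ η ∈ P.V, cn.cov ψ η ∈ P.V)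
    (hQ : ∀ (ψ : P.X) (w : P.Q), cn.cov ψ (W.ι w) ∈ LinearMap.range W.ι)
    (hH : ∀ ψ ∈ P.H, ∀ w : P.Q, cn.torsion ψ (W.ι w) ∈ P.H)
    {η₁ η₂ : P.X} (h₁ : η₁ ∈ P.V) (h₂ : η₂ ∈ P.V) :
    P.levi (cn.torsion ξ₀ (W.ι (P.levi ξ₀ η₁))) η₂
        = (2 : P.C) • P.levi ξ₀ (cn.torsion η₁ (W.ι (P.levi ξ₀ η₂))) ↔
      cn.cov (W.ι (P.levi ξ₀ η₂)) η₁ = W.PiV (P.lie (W.ι (P.levi ξ₀ η₂)) η₁) +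
        (P.half * α (P.lie ξ₀ (P.lie ξ₀ η₁))) • η₂ := by
  have ha : α (cn.torsion ξ₀ (W.ι (P.levi ξ₀ η₁))) = -α (P.lie ξ₀ (P.lie ξ₀ η₁)) := by
    obtain ⟨w, hw⟩ := hQ ξ₀ (P.levi ξ₀ η₁)
    have h := congrArg (fun x => α (P.lie ξ₀ x)) (lie_scale hξ₀ hW hα h₁)
    simp only [lie_add_right, map_add, alpha_lie_scale hξ₀ hW hα (W.PiV_mem _), zero_add] at h
    rw [torsion, hs, sub_zero, map_sub, ← hw, alpha_ι hξ₀ hα, zero_sub, ← h]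
  set c := cn.cov (W.ι (P.levi ξ₀ η₂)) η₁ - W.PiV (P.lie (W.ι (P.levi ξ₀ η₂)) η₁) with hc
  have hcV : c ∈ P.V := P.V.sub_mem (hV _ _ h₁) (W.PiV_mem _)
  have hb : W.PiV (cn.torsion η₁ (W.ι (P.levi ξ₀ η₂))) = (-1 : P.C) • c := by
    obtain ⟨w, hw⟩ := hQ η₁ (P.levi ξ₀ η₂)
    rw [torsion, map_sub, map_sub, ← hw, (Pi_ι w).2, (Pi_of_mem_V (hV _ _ h₁)).2,
      P.lie_skew (W.ι (P.levi ξ₀ η₂)) η₁, map_neg, hc, neg_one_smul]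
    abel
  rw [levi_H_left hξ₀ hα (hH _ (E_le_H hξ₀.mem) _) h₂,
    levi_H_right hξ₀ hα (hH _ (V_le_H h₁) _), ha, hb, ← sub_eq_iff_eq_add', ← hc,
    ← levi_smul_right _ _ (V_le_H h₂), levi_smul_right _ _ (V_le_H hcV), smul_smul,
    ← levi_smul_right _ _ (V_le_H hcV)]
  constructor
  · intro h
    have h' := levi_scale_inj hξ₀ hα (P.V.smul_mem _ h₂) (P.V.smul_mem _ hcV) h
    have h'' := congrArg (fun x => (-P.half) • x) h'
    simp only [smul_smul] at h''
    rw [show -P.half * (2 * -1) = P.half * 2 by ring, half_mul_two, one_smul] at h''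
    rw [← h'']
    congr 1
    ring
  · intro h
    rw [h, smul_smul]
    congr 2
    linear_combination α (P.lie ξ₀ (P.lie ξ₀ η₁)) * half_mul_two (P := P)

end Conn

/-! ### Existence and uniqueness of the extension -/

lemma ExtendsPartialWeyl.eq (hξ₀ : P.IsScale ξ₀) (hα : ∀ ψ : P.X, W.PiE ψ = α ψ • ξ₀)
    {c₁ c₂ : Conn P.toVFCalc} (h₁ : ExtendsPartialWeyl P ξ₀ W α c₁)
    (h₂ : ExtendsPartialWeyl P ξ₀ W α c₂) : c₁ = c₂ := by
  obtain ⟨a1, a2, -, -, -, a6, a7⟩ := h₁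
  obtain ⟨b1, b2, -, -, -, b6, b7⟩ := h₂
  have hV (w : P.Q) (η : P.X) (h : η ∈ P.V) : c₁.cov (W.ι w) η = c₂.cov (W.ι w) η := by
    obtain ⟨η', hη', rfl⟩ := levi_scale_surj hξ₀ w
    rw [a6 _ hη' _ h, b6 _ hη' _ h]
  have hιι (w w' : P.Q) : c₁.cov (W.ι w) (W.ι w') = c₂.cov (W.ι w) (W.ι w') := by
    obtain ⟨η', hη', rfl⟩ := levi_scale_surj hξ₀ w'
    rw [a7 _ _ hη', b7 _ _ hη', hV _ _ hη']
  have hι (w : P.Q) (φ : P.X) : c₁.cov (W.ι w) φ = c₂.cov (W.ι w) φ := by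
    rw [decomp' hα φ]
    simp only [Conn.add_right, Conn.leibniz, a2, b2, hV _ _ (W.PiV_mem φ), hιι]
  have hcov : c₁.cov = c₂.cov := by
    funext ψ φ
    rw [decomp' hα ψ]
    have hH : α ψ • ξ₀ + W.PiV ψ ∈ P.H :=
      P.H.add_mem (P.H.smul_mem _ (E_le_H hξ₀.mem)) (V_le_H (W.PiV_mem ψ))
    rw [c₁.add_left, c₂.add_left, hι, a1 ⟨_, hH⟩, b1 ⟨_, hH⟩]
  cases c₁
  cases c₂
  cases hcov
  rfl

/-- The inverse `J : Q → V ⊂ TM` of `η ↦ 𝓛(ξ₀, η)`. -/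
lemma exists_leviInv (hξ₀ : P.IsScale ξ₀) (hα : ∀ ψ : P.X, W.PiE ψ = α ψ • ξ₀) :
    ∃ J : P.Q →ₗ[P.C] P.X, (∀ w, J w ∈ P.V) ∧ (∀ w, P.levi ξ₀ (J w) = w) ∧
      ∀ η ∈ P.V, J (P.levi ξ₀ η) = η := by
  choose J hJV hJ using levi_scale_surj hξ₀
  refine ⟨⟨⟨J, fun w w' => ?_⟩, fun f w => ?_⟩, hJV, hJ, fun η h => ?_⟩
  · refine levi_scale_inj hξ₀ hα (hJV _) (P.V.add_mem (hJV _) (hJV _)) ?_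
    rw [levi_add_right, hJ, hJ, hJ]
  · refine levi_scale_inj hξ₀ hα (hJV _) (P.V.smul_mem _ (hJV _)) ?_
    change _ = P.levi ξ₀ (f • J w)
    rw [levi_smul_right _ _ (V_le_H (hJV _)), hJ, hJ]
  · exact levi_scale_inj hξ₀ hα (hJV _) h (hJ _)

/-- The connection `∇^V` in `ι(Q)`-directions, `∇_{ι(w)} η`, where `J` is the inverse of
`η ↦ 𝓛(ξ₀, η)`. -/
noncomputable def covVQ (ξ₀ : P.X) (W : PartialWeylData P) (α : P.X →ₗ[P.C] P.C)
    (J : P.Q →ₗ[P.C] P.X) (w : P.Q) (η : P.X) : P.X :=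
  W.PiV (P.lie (W.ι w) η) + (P.half * α (P.lie ξ₀ (P.lie ξ₀ η))) • J w

section covVQ

variable {J : P.Q →ₗ[P.C] P.X}

lemma covVQ_mem (hJ : ∀ w, J w ∈ P.V) (w : P.Q) (η : P.X) : covVQ ξ₀ W α J w η ∈ P.V :=
  P.V.add_mem (W.PiV_mem _) (P.V.smul_mem _ (hJ w))

lemma covVQ_add_left (w w' : P.Q) (η : P.X) :
    covVQ ξ₀ W α J (w + w') η = covVQ ξ₀ W α J w η + covVQ ξ₀ W α J w' η := by
  simp only [covVQ, map_add, P.lie_add_left, smul_add]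
  abel

lemma covVQ_smul_left (f : P.C) (w : P.Q) (η : P.X) :
    covVQ ξ₀ W α J (f • w) η = f • covVQ ξ₀ W α J w η := by
  simp only [covVQ, map_smul, lie_smul_left, map_sub, (Pi_ι w).2, smul_zero, sub_zero, smul_add,
    smul_smul, mul_comm]

lemma covVQ_add_right (w : P.Q) (η η' : P.X) :
    covVQ ξ₀ W α J w (η + η') = covVQ ξ₀ W α J w η + covVQ ξ₀ W α J w η' := by
  simp only [covVQ, map_add, lie_add_right, mul_add, add_smul]
  abel

lemma covVQ_zero_right (w : P.Q) : covVQ ξ₀ W α J w 0 = 0 := by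
  simpa using covVQ_add_right (ξ₀ := ξ₀) (W := W) (α := α) (J := J) w 0 0

/-- The Leibniz rule holds because `α` vanishes on `V` and on `[ξ₀, V]`, which makes
`η ↦ α([ξ₀,[ξ₀,η]])` tensorial on `V`. -/
lemma covVQ_leibniz (hξ₀ : P.IsScale ξ₀) (hW : SatisfiesEqs P ξ₀ W)
    (hα : ∀ ψ : P.X, W.PiE ψ = α ψ • ξ₀) (f : P.C) (w : P.Q) {η : P.X} (h : η ∈ P.V) :
    covVQ ξ₀ W α J w (f • η) = f • covVQ ξ₀ W α J w η + P.D (W.ι w) f • η := by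
  simp only [covVQ, P.lie_smul_right, lie_add_right, map_add, map_smul, alpha_V hξ₀ hα h,
    alpha_lie_scale hξ₀ hW hα h, (Pi_of_mem_V h).2, add_zero, smul_eq_mul, mul_zero,
    smul_add, smul_smul]
  rw [show P.half * (f * α (P.lie ξ₀ (P.lie ξ₀ η))) = f * (P.half * α (P.lie ξ₀ (P.lie ξ₀ η)))
    by ring]
  abel

end covVQ

lemma exists_extension (hξ₀ : P.IsScale ξ₀) (hW : SatisfiesEqs P ξ₀ W)
    (hα : ∀ ψ : P.X, W.PiE ψ = α ψ • ξ₀) :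
    ∃ cn : Conn P.toVFCalc, ExtendsPartialWeyl P ξ₀ W α cn := by
  obtain ⟨J, hJV, hLJ, hJL⟩ := exists_leviInv hξ₀ hα
  let piH : P.X →ₗ[P.C] P.H := (W.PiE + W.PiV).codRestrict P.H
    (fun x => P.H.add_mem (E_le_H (W.PiE_mem x)) (V_le_H (W.PiV_mem x)))
  have hpiH (x : P.X) : x = (piH x : P.X) + W.ι (P.q x) := W.decomp x
  have piH_H (x : P.H) : piH x = x := by
    refine Subtype.ext ?_
    have h := hpiH x
    rw [q_eq_zero_iff.2 x.2, map_zero, add_zero] at h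
    exact h.symm
  have piH_ι (w : P.Q) : piH (W.ι w) = 0 := by
    refine Subtype.ext ?_
    change W.PiE (W.ι w) + W.PiV (W.ι w) = 0
    rw [(Pi_ι w).1, (Pi_ι w).2, add_zero]
  have Wcov_zero (φ : P.X) : W.cov 0 φ = 0 := by
    simpa using W.cov_add_left 0 0 φ
  -- the derivative in direction `ι(w)`, component by component
  let N : P.Q → P.X → P.X := fun w φ =>
    P.D (W.ι w) (α φ) • ξ₀ + covVQ ξ₀ W α J w (W.PiV φ)
      + W.ι (P.levi ξ₀ (covVQ ξ₀ W α J w (J (P.q φ))))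
  have N_add_left (w w' : P.Q) (φ : P.X) : N (w + w') φ = N w φ + N w' φ := by
    simp only [N, map_add, P.D_add_left, add_smul, covVQ_add_left, levi_add_right]
    abel
  have N_smul_left (f : P.C) (w : P.Q) (φ : P.X) : N (f • w) φ = f • N w φ := by
    simp only [N, map_smul, P.D_smul_left, covVQ_smul_left,
      levi_smul_right _ _ (V_le_H (covVQ_mem hJV _ _)), smul_add, smul_smul]
  have N_add_right (w : P.Q) (φ φ' : P.X) : N w (φ + φ') = N w φ + N w φ' := by
    simp only [N, map_add, P.D_add_right, add_smul, covVQ_add_right, levi_add_right]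
    abel
  have N_leibniz (f : P.C) (w : P.Q) (φ : P.X) :
      N w (f • φ) = f • N w φ + P.D (W.ι w) f • φ := by
    simp only [N, map_smul, smul_eq_mul, P.D_mul_right,
      covVQ_leibniz hξ₀ hW hα f w (W.PiV_mem φ), covVQ_leibniz hξ₀ hW hα f w (hJV (P.q φ)),
      levi_add_right, levi_smul_right _ _ (V_le_H (covVQ_mem hJV _ _)),
      levi_smul_right _ _ (V_le_H (hJV _)), hLJ, map_add]
    have h : P.D (W.ι w) f • φ = (α φ * P.D (W.ι w) f) • ξ₀ + P.D (W.ι w) f • W.PiV φ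
        + P.D (W.ι w) f • W.ι (P.q φ) := by
      conv_lhs => rw [decomp' hα φ]
      rw [smul_add, smul_add, smul_smul, mul_comm]
    simp only [h, smul_add, add_smul, smul_smul]
    abel
  let cn : Conn P.toVFCalc :=
    { cov := fun ψ φ => W.cov (piH ψ) φ + N (P.q ψ) φ
      add_left := fun ψ₁ ψ₂ φ => by
        simp only [map_add, W.cov_add_left, N_add_left]
        abel
      smul_left := fun f ψ φ => by
        simp only [map_smul, W.cov_smul_left, N_smul_left, smul_add]
      add_right := fun ψ φ₁ φ₂ => by
        simp only [W.cov_add_right, N_add_right]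
        abel
      leibniz := fun f ψ φ => by
        have h : P.D ψ f = P.D (piH ψ) f + P.D (W.ι (P.q ψ)) f := by
          rw [← P.D_add_left, ← hpiH]
        simp only [W.cov_leibniz, N_leibniz, h, smul_add, add_smul]
        abel }
  have hcn (ψ φ : P.X) : cn.cov ψ φ = W.cov (piH ψ) φ + N (P.q ψ) φ := rfl
  have hcnι (w : P.Q) (φ : P.X) : cn.cov (W.ι w) φ = N w φ := by
    rw [hcn, piH_ι, Wcov_zero, zero_add, W.q_ι]
  have D_zero (ψ : P.X) : P.D ψ 0 = 0 := by simpa using P.D_algebraMap ψ 0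
  have N_scale (w : P.Q) : N w ξ₀ = 0 := by
    simp only [N, alpha_scale hξ₀ hα, D_one, (Pi_of_mem_E hξ₀.mem).2, q_E hξ₀.mem, map_zero,
      covVQ_zero_right, levi_zero_right, zero_smul, add_zero]
  have N_V (w : P.Q) (η : P.X) (h : η ∈ P.V) : N w η = covVQ ξ₀ W α J w η := by
    simp only [N, alpha_V hξ₀ hα h, D_zero, (Pi_of_mem_V h).2, q_V h, map_zero,
      covVQ_zero_right, levi_zero_right, zero_smul, add_zero, zero_add]
  have N_ι (w w' : P.Q) : N w (W.ι w') = W.ι (P.levi ξ₀ (covVQ ξ₀ W α J w (J w'))) := by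
    simp only [N, alpha_ι hξ₀ hα, D_zero, (Pi_ι w').2, W.q_ι,
      covVQ_zero_right, zero_smul, zero_add]
  have hs (ψ : P.X) : cn.cov ψ ξ₀ = 0 := by
    rw [hcn, cov_scale hW, N_scale, add_zero]
  refine ⟨cn, ?_, hs, fun ψ ξ h => cn.cov_E hξ₀ hs ψ h, ?_, ?_, ?_, ?_⟩
  · intro ψ φ
    have h0 : N 0 φ = 0 := by simpa using N_add_left 0 0 φ
    rw [hcn, piH_H, q_eq_zero_iff.2 ψ.2, h0, add_zero]
  · intro ψ η h
    rw [hcn, N_V _ _ h]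
    exact P.V.add_mem (hW.memV _ _ h) (covVQ_mem hJV _ _)
  · intro ψ w
    obtain ⟨η, hη, rfl⟩ := levi_scale_surj hξ₀ w
    rw [hcn, N_ι, cov_ι_levi hξ₀ hW _ hη, ← map_add]
    exact ⟨_, rfl⟩
  · intro η h η' h'
    rw [hcnι, N_V _ _ h', covVQ, hJL η h]
  · intro w η h
    rw [hcnι, hcnι, N_ι, N_V _ _ h, hJL η h]

/-! ### The Weyl structure -/

/-- An extension satisfies the conditions characterizing the Weyl structure of `ξ₀`. -/
lemma ExtendsPartialWeyl.exists_weyl (hξ₀ : P.IsScale ξ₀) (hW : SatisfiesEqs P ξ₀ W)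
    (hα : ∀ ψ : P.X, W.PiE ψ = α ψ • ξ₀) {cn : Conn P.toVFCalc}
    (h : ExtendsPartialWeyl P ξ₀ W α cn) :
    ∃ W' : WeylStructure P ξ₀, W'.conn = cn ∧ W'.ι = W.ι := by
  obtain ⟨hH, hs, hE, hV, hQ, h6, h7⟩ := h
  have hι (ψ η : P.X) (hη : η ∈ P.V) :
      cn.cov ψ (W.ι (P.levi ξ₀ η)) = W.ι (P.levi ξ₀ (cn.cov ψ η)) := by
    have hmem : α ψ • ξ₀ + W.PiV ψ ∈ P.H :=
      P.H.add_mem (P.H.smul_mem _ (E_le_H hξ₀.mem)) (V_le_H (W.PiV_mem ψ))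
    rw [decomp' hα ψ, cn.add_left, cn.add_left _ _ η, levi_add_right, map_add, ← h7 _ _ hη,
      hH ⟨_, hmem⟩, hH ⟨_, hmem⟩, cov_ι_levi hξ₀ hW _ hη]
  have htors : ∀ ψ ∈ P.H, ∀ w : P.Q, cn.torsion ψ (W.ι w) ∈ P.H := by
    intro ψ hψ w
    obtain ⟨η, hη, rfl⟩ := levi_scale_surj hξ₀ w
    have h1 : cn.cov (W.ι (P.levi ξ₀ η)) ψ ∈ P.H := by
      obtain ⟨x, hx, y, hy, rfl⟩ := Submodule.mem_sup.1 hψ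
      rw [cn.add_right]
      exact P.H.add_mem (E_le_H (hE _ _ hx)) (V_le_H (hV _ _ hy))
    rw [← q_eq_zero_iff, Conn.torsion, map_sub, map_sub, q_eq_zero_iff.2 h1, hι _ _ hη, W.q_ι,
      hH ⟨ψ, hψ⟩, levi_cov hξ₀ hW hα _ hη, sub_zero]
    exact sub_self _
  refine ⟨⟨cn, W.ι, W.q_ι, hE, hV, hQ, hs, ?_, ?_, htors, ?_⟩, rfl, rfl⟩
  · intro ψ ξ hξ η hη
    obtain ⟨f, rfl⟩ := hξ₀.span ξ hξ
    have hξH := E_le_H hξ₀.mem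
    rw [levi_smul_left _ _ hξH, levi_smul_left _ _ hξH, map_smul, cn.leibniz, cn.leibniz, hs,
      smul_zero, zero_add, levi_smul_left _ _ hξH, hι _ _ hη, map_smul, map_smul, add_comm]
  · intro ξ hξ η hη
    -- the `E`- and `V`-components of the torsion vanish
    have hcov : W.cov ⟨ξ, E_le_H hξ⟩ η = W.PiV (P.lie ξ η) := by
      have h := hW.eqVE ⟨ξ, E_le_H hξ⟩ hξ η hη
      exact levi_scale_inj hξ₀ hα (hW.memV _ _ hη) (W.PiV_mem _) (h.1.trans h.2.symm)
    have hE' : cn.cov η ξ = -W.PiE (P.lie ξ η) := by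
      obtain ⟨f, rfl⟩ := hξ₀.span ξ hξ
      rw [cn.leibniz, hs, smul_zero, zero_add, hW.eqPiE f η hη, neg_neg]
    refine ⟨-P.q (P.lie ξ η), ?_⟩
    rw [Conn.torsion, hE', hH ⟨ξ, E_le_H hξ⟩, hcov, map_neg]
    nth_rewrite 4 [W.decomp (P.lie ξ η)]
    abel
  · intro η₁ h₁ η₂ h₂
    exact (cn.norm_iff hξ₀ hW hα hs hV hQ htors h₁ h₂).2 (h6 _ h₂ _ h₁)

/-- In any Weyl structure, `𝓛(ξ₀, ∇_ψ η) = q([ψ, ι(𝓛(ξ₀, η))])` for `ψ ∈ H`. -/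
lemma WeylStructure.levi_cov (hξ₀ : P.IsScale ξ₀) (S : WeylStructure P ξ₀) {ψ : P.X}
    (hψ : ψ ∈ P.H) {η : P.X} (hη : η ∈ P.V) :
    P.levi ξ₀ (S.conn.cov ψ η) = P.levi ψ (S.ι (P.levi ξ₀ η)) := by
  have h1 : S.conn.cov (S.ι (P.levi ξ₀ η)) ψ ∈ P.H := by
    obtain ⟨x, hx, y, hy, rfl⟩ := Submodule.mem_sup.1 hψ
    rw [S.conn.add_right]
    exact P.H.add_mem (E_le_H (S.parE _ _ hx)) (V_le_H (S.parV _ _ hy))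
  have h := q_eq_zero_iff.2 (S.torsHQ ψ hψ (P.levi ξ₀ η))
  rw [Conn.torsion, map_sub, map_sub, q_eq_zero_iff.2 h1, S.parLevi _ _ hξ₀.mem _ hη,
    S.parScale, levi_zero_left, map_zero, zero_add, S.q_ι, sub_zero, sub_eq_zero] at h
  exact h

/-- The splitting is determined: `τ(ξ₀, η) ∈ ι(Q)` gives `[ξ₀,η] = ∇_{ξ₀}η + ι(𝓛(ξ₀,η))`, and
`τ(ξ₀, ι(Q)) ⊂ H` then forces `𝓛(ξ₀, ∇_{ξ₀}η) = ½ q([ξ₀,[ξ₀,η]])`. -/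
lemma WeylStructure.ι_eq (hξ₀ : P.IsScale ξ₀) (hW : SatisfiesEqs P ξ₀ W)
    (hα : ∀ ψ : P.X, W.PiE ψ = α ψ • ξ₀) (S : WeylStructure P ξ₀) : S.ι = W.ι := by
  refine LinearMap.ext fun w => ?_
  obtain ⟨η, hη, rfl⟩ := levi_scale_surj hξ₀ w
  have hlie : P.lie ξ₀ η = S.conn.cov ξ₀ η + S.ι (P.levi ξ₀ η) := by
    obtain ⟨u, hu⟩ := S.torsEV ξ₀ hξ₀.mem η hη
    rw [Conn.torsion, S.parScale, sub_zero] at hu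
    have hq := congrArg P.q hu
    rw [S.q_ι, map_sub, q_V (S.parV _ _ hη), zero_sub] at hq
    rw [hq, map_neg] at hu
    rw [levi, neg_eq_iff_eq_neg.1 hu]
    abel
  have hcov : S.conn.cov ξ₀ η = W.PiV (P.lie ξ₀ η) := by
    refine levi_scale_inj hξ₀ hα (S.parV _ _ hη) (W.PiV_mem _) ?_
    rw [levi_PiV_lie hξ₀ hW hη]
    have h : P.q (P.lie ξ₀ (P.lie ξ₀ η)) = _ := congrArg (P.levi ξ₀) hlie
    rw [levi_add_right, ← S.levi_cov hξ₀ (E_le_H hξ₀.mem) hη] at h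
    rw [h, smul_add, ← add_smul, half_add_half, one_smul]
  have h := hlie.symm.trans (lie_scale hξ₀ hW hα hη)
  rw [hcov] at h
  exact add_left_cancel h

lemma WeylStructure.extendsPartialWeyl (hξ₀ : P.IsScale ξ₀) (hW : SatisfiesEqs P ξ₀ W)
    (hα : ∀ ψ : P.X, W.PiE ψ = α ψ • ξ₀) (S : WeylStructure P ξ₀) :
    ExtendsPartialWeyl P ξ₀ W α S.conn := by
  have hι := S.ι_eq hξ₀ hW hα
  have hcovι (ψ : P.X) (η : P.X) (hη : η ∈ P.V) :
      S.conn.cov ψ (W.ι (P.levi ξ₀ η)) = W.ι (P.levi ξ₀ (S.conn.cov ψ η)) := by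
    rw [← hι, S.parLevi _ _ hξ₀.mem _ hη, S.parScale, levi_zero_left, map_zero, zero_add]
  have hV (ψ : P.H) (η : P.X) (hη : η ∈ P.V) : S.conn.cov ψ η = W.cov ψ η := by
    refine levi_scale_inj hξ₀ hα (S.parV _ _ hη) (hW.memV _ _ hη) ?_
    rw [S.levi_cov hξ₀ ψ.2 hη, PartialWeylData.levi_cov hξ₀ hW hα _ hη, hι]
  refine ⟨?_, S.parScale, S.parE, S.parV, ?_, ?_, ?_⟩
  · intro ψ φ
    obtain ⟨η, hη, hη'⟩ := levi_scale_surj hξ₀ (P.q φ)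
    rw [decomp' hα φ, ← hη']
    simp only [S.conn.add_right, W.cov_add_right, S.conn.leibniz, W.cov_leibniz, S.parScale,
      cov_scale hW, hV _ _ (W.PiV_mem φ), hcovι _ _ hη, cov_ι_levi hξ₀ hW _ hη, hV _ _ hη]
  · intro ψ w
    rw [← hι]
    exact S.parQ ψ w
  · intro η hη η' hη'
    have hQ := S.parQ
    have hH := S.torsHQ
    have hn := S.norm η' hη' η hη
    rw [hι] at hQ hH hn
    exact (S.conn.norm_iff hξ₀ hW hα S.parScale S.parV hQ hH hη' hη).1 hn
  · intro w η hη
    exact hcovι _ _ hη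

end

/-- Proposition 2.5 of the paper.  Let `(M,E,V)` be a path geometry,
`ξ₀` a nowhere vanishing section of `E`, `W` the partial Weyl structure determined by
`ξ₀` (with projection `Π` and splitting `ι`), and `α ∈ Ω¹(M)` the one-form with
`Π_E = α ξ₀`.  Then the partial connections of `W` extend uniquely to a full linear
connection on `TM` by requiring `∇^E ξ₀ = 0` and the two displayed formulas; the
resulting pair `(∇, Π)` satisfies all conditions of Theorem 2.2 (i.e. it is a Weyl
structure) and is uniquely determined by them. -/
theorem partialWeyl_extends_uniquely (P : PathGeometry) (ξ₀ : P.X) (hξ₀ : P.IsScale ξ₀)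
    (W : PartialWeylData P) (hW : SatisfiesEqs P ξ₀ W)
    (α : P.X →ₗ[P.C] P.C) (hα : ∀ ψ : P.X, W.PiE ψ = α ψ • ξ₀) :
    (∃! cn : Conn P.toVFCalc, ExtendsPartialWeyl P ξ₀ W α cn) ∧
      ∀ cn : Conn P.toVFCalc, ExtendsPartialWeyl P ξ₀ W α cn →
        (∃ W' : WeylStructure P ξ₀, W'.conn = cn ∧ W'.ι = W.ι) ∧
        (∀ W'' : WeylStructure P ξ₀, W''.conn.cov = cn.cov ∧ W''.ι = W.ι) := by
  obtain ⟨cn₀, h₀⟩ := exists_extension hξ₀ hW hα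
  refine ⟨⟨cn₀, h₀, fun cn h => h.eq hξ₀ hα h₀⟩, fun cn h => ⟨h.exists_weyl hξ₀ hW hα, ?_⟩⟩
  intro S
  exact ⟨congrArg Conn.cov ((S.extendsPartialWeyl hξ₀ hW hα).eq hξ₀ hα h), S.ι_eq hξ₀ hW hα⟩
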